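/- Fix δ₀, ρ₀ ∈ (0,1). There exists a constant c > 0 depending only on (δ₀, ρ₀) such that for all sufficiently large n and all δ ∈ [0, 1 − δ₀ − (1/4)·log log n / log n], one has n · log Φ(√(2 log n)·(δ₀ + δ)) ≤ −(c n / √(log n)) · exp(−log(n)·(δ₀ + δ)²), where Φ is the standard normal distribution function. -/

import Mathlib

open MeasureTheory Real Filter

/-- The standard normal density `φ`. -/
noncomputable def stdNormalPDF (s : ℝ) : ℝ :=
  (Real.sqrt (2 * Real.pi))⁻¹ * Real.exp (-s ^ 2 / 2)

/-- The standard normal distribution function `Φ`. -/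
noncomputable def stdNormalCDF (x : ℝ) : ℝ :=
  ∫ s in Set.Iic x, stdNormalPDF s

lemma stdNormalPDF_eq : stdNormalPDF = ProbabilityTheory.gaussianPDFReal 0 1 := by
  ext s
  simp [stdNormalPDF, ProbabilityTheory.gaussianPDFReal]

lemma stdNormalPDF_pos (s : ℝ) : 0 < stdNormalPDF s := by
  unfold stdNormalPDF
  positivity

lemma stdNormalPDF_integrable : Integrable stdNormalPDF := by
  rw [stdNormalPDF_eq]
  exact ProbabilityTheory.integrable_gaussianPDFReal 0 1

lemma stdNormalPDF_integral : ∫ s, stdNormalPDF s = 1 := by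
  rw [stdNormalPDF_eq]
  exact ProbabilityTheory.integral_gaussianPDFReal_eq_one 0 one_ne_zero

lemma stdNormalCDF_pos (x : ℝ) : 0 < stdNormalCDF x := by
  unfold stdNormalCDF
  rw [setIntegral_pos_iff_support_of_nonneg_ae
    (Eventually.of_forall fun s => (stdNormalPDF_pos s).le) stdNormalPDF_integrable.integrableOn]
  have : Function.support stdNormalPDF = Set.univ := by
    ext s
    simp [(stdNormalPDF_pos s).ne']
  rw [this, Set.univ_inter]
  simp

lemma stdNormalCDF_le (x h : ℝ) (hx : 0 ≤ x) (hh : 0 ≤ h) :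
    stdNormalCDF x ≤ 1 - h * stdNormalPDF (x + h) := by
  have h1 : stdNormalCDF x + ∫ s in Set.Ioi x, stdNormalPDF s = 1 := by
    have := integral_add_compl (μ := volume) (measurableSet_Iic (a := x)) stdNormalPDF_integrable
    rw [stdNormalPDF_integral, Set.compl_Iic] at this
    exact this
  have h2 : ∫ s in Set.Ioc x (x + h), stdNormalPDF s ≤ ∫ s in Set.Ioi x, stdNormalPDF s :=
    setIntegral_mono_set stdNormalPDF_integrable.integrableOn
      (Eventually.of_forall fun s => (stdNormalPDF_pos s).le)
      (Eventually.of_forall Set.Ioc_subset_Ioi_self)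
  have h3 : ∫ _s in Set.Ioc x (x + h), stdNormalPDF (x + h) ≤
      ∫ s in Set.Ioc x (x + h), stdNormalPDF s := by
    apply setIntegral_mono_on (by simp) stdNormalPDF_integrable.integrableOn measurableSet_Ioc
    intro s hs
    unfold stdNormalPDF
    have : s ^ 2 ≤ (x + h) ^ 2 := by
      have := hs.1
      have := hs.2
      apply pow_le_pow_left₀ <;> linarith
    gcongr
  have h4 : ∫ _s in Set.Ioc x (x + h), stdNormalPDF (x + h) = h * stdNormalPDF (x + h) := by
    simp [hh]
  linarith

theorem n_log_Phi_upper_bound (δ₀ ρ₀ : ℝ)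
    (hδ : δ₀ ∈ Set.Ioo (0 : ℝ) 1) (hρ : ρ₀ ∈ Set.Ioo (0 : ℝ) 1) :
    ∃ c : ℝ, 0 < c ∧
      ∀ᶠ n : ℕ in atTop,
        ∀ δ ∈ Set.Icc (0 : ℝ)
            (1 - δ₀ - (1 / 4) * Real.log (Real.log n) / Real.log n),
          (n : ℝ) * Real.log (stdNormalCDF (Real.sqrt (2 * Real.log n) * (δ₀ + δ)))
            ≤ -(c * n / Real.sqrt (Real.log n))
                * Real.exp (-(Real.log n) * (δ₀ + δ) ^ 2) := by
  refine ⟨(Real.sqrt (2 * Real.pi))⁻¹ * Real.exp (-3), by positivity, ?_⟩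
  have hlim : Tendsto (fun n : ℕ => Real.log (n : ℝ)) atTop atTop :=
    Real.tendsto_log_atTop.comp tendsto_natCast_atTop_atTop
  filter_upwards [hlim.eventually_ge_atTop 1] with n hL δ hd
  set L := Real.log (n : ℝ) with hLdef
  obtain ⟨hd0, hd1⟩ := hd
  have hLL : 0 ≤ 1 / 4 * Real.log L / L := by
    have := Real.log_nonneg hL
    positivity
  have ht0 : 0 ≤ δ₀ + δ := by linarith [hδ.1]
  have ht1 : δ₀ + δ ≤ 1 := by linarith
  set t := δ₀ + δ with htdef
  have hs : 1 ≤ √L := Real.one_le_sqrt.mpr hL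
  have hsq : √L ^ 2 = L := Real.sq_sqrt (by linarith)
  have h2 : √2 ^ 2 = (2 : ℝ) := Real.sq_sqrt (by norm_num)
  have h2' : √2 ≤ (2 : ℝ) := by nlinarith [Real.sqrt_nonneg 2]
  have hx : √(2 * L) * t = √2 * √L * t := by rw [Real.sqrt_mul (by norm_num)]
  have hinv : √L * (√L)⁻¹ = 1 := mul_inv_cancel₀ (by linarith)
  have hh1 : (√L)⁻¹ ≤ 1 := inv_le_one_of_one_le₀ hs
  have hh0 : 0 ≤ (√L)⁻¹ := by positivity
  have key := stdNormalCDF_le (√(2 * L) * t) (√L)⁻¹ (by positivity) hh0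
  have hlog := Real.log_le_sub_one_of_pos (stdNormalCDF_pos (√(2 * L) * t))
  have hpdf : (√(2 * Real.pi))⁻¹ * (Real.exp (-3) * Real.exp (-L * t ^ 2)) ≤
      stdNormalPDF (√(2 * L) * t + (√L)⁻¹) := by
    unfold stdNormalPDF
    rw [← Real.exp_add]
    gcongr
    rw [hx]
    have e : (√2 * √L * t + (√L)⁻¹) ^ 2 = 2 * L * t ^ 2 + 2 * (√2 * t) + (√L)⁻¹ ^ 2 := by
      calc _ = √2 ^ 2 * √L ^ 2 * t ^ 2 + 2 * (√2 * t) * (√L * (√L)⁻¹) + (√L)⁻¹ ^ 2 := by ring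
        _ = _ := by rw [h2, hsq, hinv]; ring
    rw [e]
    have a1 : √2 * t ≤ 2 := by nlinarith [Real.sqrt_nonneg 2]
    have a2 : (√L)⁻¹ ^ 2 ≤ 1 := pow_le_one₀ hh0 hh1
    linarith
  have hb := mul_le_mul_of_nonneg_left hpdf hh0
  have hfin : Real.log (stdNormalCDF (√(2 * L) * t)) ≤
      -((√L)⁻¹ * ((√(2 * Real.pi))⁻¹ * (Real.exp (-3) * Real.exp (-L * t ^ 2)))) := by linarith
  calc _ ≤ (n : ℝ) * _ := mul_le_mul_of_nonneg_left hfin (Nat.cast_nonneg n)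
    _ = _ := by ring
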